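/- If E ⊆ ℝ² is an s-minimal cone (tE = E for all t > 0, and E is s-minimal in every ball B_R), then E is a half-plane. -/

import Mathlib

open MeasureTheory

/-- The interaction energy `L(A,B) = ∫_A ∫_B |x-y|^{-(n+s)} dx dy`. -/
noncomputable def interL (n : ℕ) (s : ℝ) (A B : Set (EuclideanSpace ℝ (Fin n))) : ENNReal :=
  ∫⁻ x in A, ∫⁻ y in B, ENNReal.ofReal (1 / ‖x - y‖ ^ ((n : ℝ) + s))

/-- The fractional `s`-perimeter `Per_s(E, Ω) = L(E ∩ Ω, ℝⁿ \ E) + L(E \ Ω, Ω \ E)`. -/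
noncomputable def fracPer (n : ℕ) (s : ℝ) (E Ω : Set (EuclideanSpace ℝ (Fin n))) : ENNReal :=
  interL n s (E ∩ Ω) Eᶜ + interL n s (E \ Ω) (Ω \ E)

/-- `E` is `s`-minimal in the open set `Ω`. -/
def SMinimalIn (n : ℕ) (s : ℝ) (E Ω : Set (EuclideanSpace ℝ (Fin n))) : Prop :=
  fracPer n s E Ω ≠ ⊤ ∧
    ∀ F : Set (EuclideanSpace ℝ (Fin n)), MeasurableSet F → F \ Ω = E \ Ω →
      fracPer n s E Ω ≤ fracPer n s F Ω


open scoped RealInnerProductSpace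

/-- Local abbreviation for the plane. -/
abbrev PlaneV := EuclideanSpace ℝ (Fin 2)

lemma aux_rpow (m u : ℝ) (hm : 1 ≤ m) (hm' : m ≤ 3/2) (hu : |u| ≤ 1/2) :
    (1 + u) ^ (-m) ≤ 1 - m * u + 5 * u ^ 2 := by
  obtain ⟨h1, h2⟩ := abs_le.mp hu
  have h0 : 0 < 1 + u := by linarith
  set w := (1 + u)⁻¹ - 1 with hw
  have hinv : 0 < (1 + u)⁻¹ := inv_pos.mpr h0
  have hmul : (1 + u)⁻¹ * (1 + u) = 1 := inv_mul_cancel₀ h0.ne'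
  have hw1 : (1 + u)⁻¹ = 1 + w := by rw [hw]; ring
  have hw' : (1 + w) * (1 + u) = 1 := by rw [← hw1]; exact hmul
  have hwpos : 0 < 1 + w := hw1 ▸ hinv
  have hw2 : 1 + w ≤ 2 := by nlinarith
  -- w = -u (1+w)
  have hwu : w = -u * (1 + w) := by linarith
  have hwle : w ≤ -u + 2 * u ^ 2 := by
    have : w = -u + u ^ 2 * (1 + w) := by
      have : w = -u + -u * w := by linarith
      nlinarith
    nlinarith [sq_nonneg u]
  have hwsq : w ^ 2 ≤ 4 * u ^ 2 := by
    rw [hwu, mul_pow, neg_sq]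
    have : (1 + w) ^ 2 ≤ 4 := by nlinarith
    nlinarith [sq_nonneg u]
  have e1 : (1 + u) ^ (-m) = (1 + w) * (1 + w) ^ (m - 1) := by
    rw [Real.rpow_neg h0.le, ← Real.inv_rpow h0.le, hw1]
    rw [← Real.rpow_one_add' hwpos.le (by linarith)]
    ring_nf
  have e2 : (1 + w) ^ (m - 1) ≤ 1 + (m - 1) * w :=
    rpow_one_add_le_one_add_mul_self (by linarith) (by linarith) (by linarith)
  rw [e1]
  calc (1 + w) * (1 + w) ^ (m - 1) ≤ (1 + w) * (1 + (m - 1) * w) := by gcongr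
    _ = 1 + m * w + (m - 1) * w ^ 2 := by ring
    _ ≤ 1 + m * (-u + 2 * u ^ 2) + (1/2) * (4 * u ^ 2) := by
      have := mul_le_mul_of_nonneg_left hwle (by linarith : 0 ≤ m)
      have h3 : (m - 1) * w ^ 2 ≤ (1/2) * (4 * u ^ 2) := by
        apply mul_le_mul (by linarith) hwsq (sq_nonneg _) (by norm_num)
      linarith
    _ ≤ _ := by nlinarith [sq_nonneg u]

/-- one-sided kernel bound -/
lemma aux_kernel (s τ : ℝ) (hs : s ∈ Set.Ioo (0 : ℝ) 1) (hτ : 0 ≤ τ) (hτ' : τ ≤ 1/6)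
    (a v : PlaneV) (ha : a ≠ 0) (hv : ‖v‖ ≤ τ * ‖a‖) :
    1 / ‖a + v‖ ^ (2 + s) ≤
      (1 / ‖a‖ ^ (2 + s)) * (1 - (2 + s) * (⟪a, v⟫ / ‖a‖ ^ 2) + 45 * τ ^ 2) := by
  have hapos : 0 < ‖a‖ := norm_pos_iff.mpr ha
  set u := (2 * ⟪a, v⟫ + ‖v‖ ^ 2) / ‖a‖ ^ 2 with hu
  have hsq : ‖a + v‖ ^ 2 = ‖a‖ ^ 2 * (1 + u) := by
    rw [norm_add_sq_real, hu]; field_simp; ring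
  have hin : |⟪a, v⟫| ≤ τ * ‖a‖ ^ 2 := by
    calc |⟪a, v⟫| ≤ ‖a‖ * ‖v‖ := abs_real_inner_le_norm a v
      _ ≤ ‖a‖ * (τ * ‖a‖) := by gcongr
      _ = _ := by ring
  have hvsq : ‖v‖ ^ 2 ≤ τ * ‖a‖ ^ 2 := by
    calc ‖v‖ ^ 2 ≤ (τ * ‖a‖) ^ 2 := by gcongr
      _ = τ * τ * ‖a‖ ^ 2 := by ring
      _ ≤ τ * 1 * ‖a‖ ^ 2 := by gcongr; linarith
      _ = _ := by ring
  have hua : |u| ≤ 3 * τ := by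
    rw [hu, abs_div, abs_of_pos (by positivity : 0 < ‖a‖ ^ 2), div_le_iff₀ (by positivity)]
    have := abs_add_le (2 * ⟪a, v⟫) (‖v‖ ^ 2)
    rw [abs_mul, abs_of_nonneg (sq_nonneg ‖v‖)] at this
    norm_num at this
    linarith
  have h1u : 0 < 1 + u := by
    have := (abs_le.mp hua).1; linarith
  have hpow : ‖a + v‖ ^ (2 + s) = ‖a‖ ^ (2 + s) * (1 + u) ^ (1 + s / 2) := by
    have e : (2 + s) = (2 : ℕ) * (1 + s / 2) := by push_cast; ring
    rw [e, Real.rpow_natCast_mul (norm_nonneg _), Real.rpow_natCast_mul (norm_nonneg _), hsq,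
      Real.mul_rpow (by positivity) h1u.le]
  have hb := aux_rpow (1 + s / 2) u (by linarith [hs.1]) (by linarith [hs.2]) (by linarith)
  rw [hpow, one_div, mul_inv, ← one_div, ← Real.rpow_neg h1u.le]
  gcongr
  refine hb.trans ?_
  have husq : u ^ 2 ≤ (3 * τ) ^ 2 := sq_le_sq' (by linarith [(abs_le.mp hua).1]) (abs_le.mp hua).2
  have hul : (2 + s) * (⟪a, v⟫ / ‖a‖ ^ 2) ≤ (1 + s / 2) * u := by
    have : u = 2 * (⟪a, v⟫ / ‖a‖ ^ 2) + ‖v‖ ^ 2 / ‖a‖ ^ 2 := by rw [hu]; ring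
    have h3 : 0 ≤ ‖v‖ ^ 2 / ‖a‖ ^ 2 := by positivity
    rw [this]
    nlinarith [hs.1]
  nlinarith

lemma aux_point (s τ : ℝ) (hs : s ∈ Set.Ioo (0 : ℝ) 1) (hτ : 0 ≤ τ) (hτ' : τ ≤ 1/6)
    (a v : PlaneV) (hv : ‖v‖ ≤ τ * ‖a‖) (p q : ℝ) (hp : |p| ≤ τ) (hq : |q| ≤ τ) :
    (1 + p) * ((1 + q) * (1 / ‖a + v‖ ^ (2 + s))) +
      (1 - p) * ((1 - q) * (1 / ‖a - v‖ ^ (2 + s))) ≤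
      (2 + 400 * τ ^ 2) * (1 / ‖a‖ ^ (2 + s)) := by
  have hN : (2 + s) ≠ 0 := by linarith [hs.1]
  by_cases ha : a = 0
  · subst ha
    have : v = 0 := by simpa using hv
    subst this
    simp [Real.zero_rpow hN]
  have hapos : 0 < ‖a‖ := norm_pos_iff.mpr ha
  have k1 := aux_kernel s τ hs hτ hτ' a v ha hv
  have k2 := aux_kernel s τ hs hτ hτ' a (-v) ha (by simpa using hv)
  rw [← sub_eq_add_neg, inner_neg_right] at k2
  set K := 1 / ‖a‖ ^ (2 + s) with hK
  have hKpos : 0 ≤ K := by positivity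
  obtain ⟨hp1, hp2⟩ := abs_le.mp hp
  obtain ⟨hq1, hq2⟩ := abs_le.mp hq
  have hin : |⟪a, v⟫ / ‖a‖ ^ 2| ≤ τ := by
    rw [abs_div, abs_of_pos (by positivity : 0 < ‖a‖ ^ 2), div_le_iff₀ (by positivity)]
    calc |⟪a, v⟫| ≤ ‖a‖ * ‖v‖ := abs_real_inner_le_norm a v
      _ ≤ ‖a‖ * (τ * ‖a‖) := by gcongr
      _ = _ := by ring
  rw [neg_div] at k2
  set α := ⟪a, v⟫ / ‖a‖ ^ 2
  have b1 : (1 + p) * ((1 + q) * (1 / ‖a + v‖ ^ (2 + s))) ≤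
      (1 + p) * ((1 + q) * (K * (1 - (2 + s) * α + 45 * τ ^ 2))) := by
    have : 0 ≤ 1 + p := by linarith
    have : 0 ≤ 1 + q := by linarith
    gcongr
  have b2 : (1 - p) * ((1 - q) * (1 / ‖a - v‖ ^ (2 + s))) ≤
      (1 - p) * ((1 - q) * (K * (1 - (2 + s) * (-α) + 45 * τ ^ 2))) := by
    have : 0 ≤ 1 - p := by linarith
    have : 0 ≤ 1 - q := by linarith
    gcongr
  refine (add_le_add b1 b2).trans ?_
  have hpq : p * q ≤ τ ^ 2 := by
    have : |p * q| ≤ τ * τ := by rw [abs_mul]; gcongr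
    nlinarith [le_abs_self (p * q)]
  have hpα : -(α * (p + q)) ≤ 2 * τ ^ 2 := by
    have : |α * (p + q)| ≤ τ * (2 * τ) := by
      rw [abs_mul]
      have : |p + q| ≤ 2 * τ := (abs_add_le p q).trans (by linarith)
      gcongr
    nlinarith [neg_abs_le (α * (p + q))]
  have h3 : (2 + s) * (-(α * (p + q))) ≤ 3 * (2 * τ ^ 2) := by
    have h0 : 0 ≤ 2 * τ ^ 2 := by positivity
    nlinarith [hs.1, hs.2]
  have hτ2 : τ ^ 2 ≤ 1 := by nlinarith
  have key : (2 + 2 * (p * q)) * (1 + 45 * τ ^ 2) + 2 * ((2 + s) * (-(α * (p + q))))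
      ≤ 2 + 400 * τ ^ 2 := by
    have : (2 + 2 * (p * q)) * (1 + 45 * τ ^ 2) ≤ (2 + 2 * τ ^ 2) * (1 + 45 * τ ^ 2) := by gcongr
    nlinarith [sq_nonneg τ]
  calc _ = K * ((2 + 2 * (p * q)) * (1 + 45 * τ ^ 2) + 2 * ((2 + s) * (-(α * (p + q))))) := by ring
    _ ≤ K * (2 + 400 * τ ^ 2) := by gcongr
    _ = _ := by ring
/-! ### Additivity of the interaction -/

lemma kernel_meas (s : ℝ) : Measurable (fun z : PlaneV × PlaneV =>
    ENNReal.ofReal (1 / ‖z.1 - z.2‖ ^ (((2 : ℕ) : ℝ) + s))) := by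
  fun_prop

lemma interL_union_left (s : ℝ) (A B C : Set PlaneV) (hB : MeasurableSet B)
    (h : Disjoint A B) : interL 2 s (A ∪ B) C = interL 2 s A C + interL 2 s B C := by
  unfold interL
  exact lintegral_union hB h

lemma interL_union_right (s : ℝ) (A B C : Set PlaneV) (hB : MeasurableSet B)
    (h : Disjoint A B) : interL 2 s C (A ∪ B) = interL 2 s C A + interL 2 s C B := by
  unfold interL
  rw [← lintegral_add_left]
  · apply lintegral_congr
    intro x
    exact lintegral_union hB h
  · exact (kernel_meas s).lintegral_prod_right'

lemma interL_mono (s : ℝ) {A B A' B' : Set PlaneV} (hA : A ⊆ A') (hB : B ⊆ B') :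
    interL 2 s A B ≤ interL 2 s A' B' := by
  unfold interL
  refine (lintegral_mono_set hA).trans (lintegral_mono fun x => lintegral_mono_set hB)

lemma fracPer_submod (s : ℝ) (A B Ω : Set PlaneV) (hA : MeasurableSet A) (hB : MeasurableSet B)
    (h : A \ Ω = B \ Ω) :
    fracPer 2 s (A ∪ B) Ω + fracPer 2 s (A ∩ B) Ω + interL 2 s (A \ B) (B \ A) ≤
      fracPer 2 s A Ω + fracPer 2 s B Ω := by
  have hx : ∀ x, x ∉ Ω → (x ∈ A ↔ x ∈ B) := fun x hx => by
    have := Set.ext_iff.mp h x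
    simpa [hx] using this
  set I1 := (A ∩ B) ∩ Ω with hI1
  set I2 := (A ∩ B) \ Ω with hI2
  set P := A \ B with hP
  set Q := B \ A with hQ
  set O := (A ∪ B)ᶜ with hO
  set O1 := Ω \ (A ∪ B) with hO1
  have mP : MeasurableSet P := hA.diff hB
  have mQ : MeasurableSet Q := hB.diff hA
  have eA1 : A ∩ Ω = I1 ∪ P := by ext x; have := hx x; simp [I1, P]; tauto
  have eA2 : Aᶜ = O ∪ Q := by ext x; simp [O, Q]; tauto
  have eA3 : A \ Ω = I2 := by ext x; have := hx x; simp [I2]; tauto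
  have eA4 : Ω \ A = O1 ∪ Q := by ext x; have := hx x; simp [O1, Q]; tauto
  have eB1 : B ∩ Ω = I1 ∪ Q := by ext x; have := hx x; simp [I1, Q]; tauto
  have eB2 : Bᶜ = O ∪ P := by ext x; simp [O, P]; tauto
  have eB3 : B \ Ω = I2 := by ext x; have := hx x; simp [I2]; tauto
  have eB4 : Ω \ B = O1 ∪ P := by ext x; have := hx x; simp [O1, P]; tauto
  have eU1 : (A ∪ B) ∩ Ω = (I1 ∪ P) ∪ Q := by ext x; have := hx x; simp [I1, P, Q]; tauto
  have eU3 : (A ∪ B) \ Ω = I2 := by ext x; have := hx x; simp [I2]; tauto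
  have eI2 : (A ∩ B)ᶜ = (O ∪ P) ∪ Q := by ext x; simp [O, P, Q]; tauto
  have eI4 : Ω \ (A ∩ B) = (O1 ∪ P) ∪ Q := by ext x; have := hx x; simp [O1, P, Q]; tauto
  have d1 : Disjoint I1 P := by rw [Set.disjoint_left]; intro x; simp [I1, P]; tauto
  have d2 : Disjoint I1 Q := by rw [Set.disjoint_left]; intro x; simp [I1, Q]; tauto
  have d3 : Disjoint O P := by rw [Set.disjoint_left]; intro x; simp [O, P]; tauto
  have d4 : Disjoint O Q := by rw [Set.disjoint_left]; intro x; simp [O, Q]; tauto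
  have d5 : Disjoint O1 P := by rw [Set.disjoint_left]; intro x; simp [O1, P]; tauto
  have d6 : Disjoint O1 Q := by rw [Set.disjoint_left]; intro x; simp [O1, Q]; tauto
  have d7 : Disjoint P Q := by rw [Set.disjoint_left]; intro x; simp [P, Q]; tauto
  have d8 : Disjoint (I1 ∪ P) Q := by rw [Set.disjoint_union_left]; exact ⟨d2, d7⟩
  have d9 : Disjoint (O ∪ P) Q := by rw [Set.disjoint_union_left]; exact ⟨d4, d7⟩
  have d10 : Disjoint (O1 ∪ P) Q := by rw [Set.disjoint_union_left]; exact ⟨d6, d7⟩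
  unfold fracPer
  rw [eU1, eU3, eI2, eI4, eA1, eA2, eA3, eA4, eB1, eB2, eB3, eB4]
  change interL 2 s (I1 ∪ P ∪ Q) O + interL 2 s I2 O1 +
    (interL 2 s I1 (O ∪ P ∪ Q) + interL 2 s I2 (O1 ∪ P ∪ Q)) + _ ≤ _
  simp only [interL_union_left s _ _ _ mP d1, interL_union_left s _ _ _ mQ d2,
    interL_union_left s _ _ _ mQ d8, interL_union_right s _ _ _ mQ d9,
    interL_union_right s _ _ _ mQ d10, interL_union_right s _ _ _ mP d3,
    interL_union_right s _ _ _ mQ d4, interL_union_right s _ _ _ mP d5,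
    interL_union_right s _ _ _ mQ d6]
  refine le_of_le_of_eq (le_self_add (b := interL 2 s Q P)) ?_
  ring

/-! ### Change of variables -/

lemma det_aux (c : ℝ) (l : PlaneV →L[ℝ] ℝ) (e : PlaneV) :
    (ContinuousLinearMap.id ℝ PlaneV + c • l.smulRight e).det = 1 + c * l e := by
  have : ((ContinuousLinearMap.id ℝ PlaneV + c • l.smulRight e : PlaneV →L[ℝ] PlaneV) :
      PlaneV →ₗ[ℝ] PlaneV) = LinearMap.transvection (c • (l : PlaneV →ₗ[ℝ] ℝ)) e := by
    ext x; simp [LinearMap.transvection, mul_assoc]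
  rw [ContinuousLinearMap.det, this, LinearMap.transvection.det]
  simp

lemma interL_image (s : ℝ) (f : PlaneV → PlaneV) (f' : PlaneV → PlaneV →L[ℝ] PlaneV)
    (hf : ∀ x, HasFDerivAt f (f' x) x) (hinj : Function.Injective f) (A B : Set PlaneV)
    (hA : MeasurableSet A) (hB : MeasurableSet B) :
    interL 2 s (f '' A) (f '' B) = ∫⁻ x in A, ∫⁻ y in B, ENNReal.ofReal |(f' x).det| *
      (ENNReal.ofReal |(f' y).det| * ENNReal.ofReal (1 / ‖f x - f y‖ ^ (((2 : ℕ) : ℝ) + s))) := by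
  unfold interL
  rw [lintegral_image_eq_lintegral_abs_det_fderiv_mul volume hA
    (fun x _ => (hf x).hasFDerivWithinAt) hinj.injOn]
  apply lintegral_congr
  intro x
  rw [lintegral_image_eq_lintegral_abs_det_fderiv_mul volume hB
    (fun x _ => (hf x).hasFDerivWithinAt) hinj.injOn, lintegral_const_mul']
  exact ENNReal.ofReal_ne_top

lemma interL_scale (s c : ℝ) (hc : 0 < c) (A B : Set PlaneV)
    (hA : MeasurableSet A) (hB : MeasurableSet B) :
    interL 2 s ((fun x => c • x) '' A) ((fun x => c • x) '' B) =
      ENNReal.ofReal (c ^ (2 - s)) * interL 2 s A B := by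
  rw [interL_image s (fun x => c • x) (fun _ => c • ContinuousLinearMap.id ℝ PlaneV)
    (fun x => (hasFDerivAt_id x).const_smul c) (smul_right_injective _ hc.ne') A B hA hB]
  unfold interL
  rw [← lintegral_const_mul' _ _ ENNReal.ofReal_ne_top]
  apply lintegral_congr
  intro x
  rw [← lintegral_const_mul' _ _ ENNReal.ofReal_ne_top]
  apply lintegral_congr
  intro y
  have hdet : (c • ContinuousLinearMap.id ℝ PlaneV).det = c ^ 2 := by
    rw [ContinuousLinearMap.det, ContinuousLinearMap.toLinearMap_smul, LinearMap.det_smul]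
    simp
  rw [hdet, ← smul_sub, norm_smul, Real.norm_of_nonneg hc.le, abs_of_pos (by positivity),
    ← ENNReal.ofReal_mul (by positivity), ← ENNReal.ofReal_mul (by positivity),
    ← ENNReal.ofReal_mul (by positivity), Real.mul_rpow hc.le (norm_nonneg _)]
  congr 1
  have e : c ^ (2 - s) = c ^ 2 * (c ^ 2 * (c ^ (((2 : ℕ) : ℝ) + s))⁻¹) := by
    rw [← Real.rpow_neg hc.le, ← Real.rpow_natCast, ← Real.rpow_add hc, ← Real.rpow_add hc]
    congr 1; push_cast; ring
  rw [e]
  simp only [one_div, mul_inv]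
  ring

/-! ### The deformation -/

section deform

variable (φ : PlaneV → ℝ) (e : PlaneV) (c : ℝ)

/-- The deformation `x ↦ x + c φ(x) e`. -/
noncomputable def dMap (x : PlaneV) : PlaneV := x + c • (φ x • e)

lemma dMap_sub (x y : PlaneV) :
    dMap φ e c x - dMap φ e c y = (x - y) + (c * (φ x - φ y)) • e := by
  unfold dMap
  rw [smul_smul, smul_smul, mul_sub, sub_smul]
  abel

lemma dMap_fderiv (hφ : Differentiable ℝ φ) (x : PlaneV) :
    HasFDerivAt (dMap φ e c)
      (ContinuousLinearMap.id ℝ PlaneV + c • (fderiv ℝ φ x).smulRight e) x := by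
  unfold dMap
  exact (hasFDerivAt_id x).add (((hφ x).hasFDerivAt.smul_const e).const_smul c)

lemma dMap_bij (Λ : NNReal) (hL : LipschitzWith Λ φ) (he : ‖e‖ = 1) (hc : |c| * Λ ≤ 1/6) :
    Function.Bijective (dMap φ e c) := by
  have happ : ApproximatesLinearOn (dMap φ e c)
      ((ContinuousLinearEquiv.refl ℝ PlaneV : PlaneV ≃L[ℝ] PlaneV) : PlaneV →L[ℝ] PlaneV)
      Set.univ (1/6 : NNReal) := by
    rw [ApproximatesLinearOn.approximatesLinearOn_iff_lipschitzOnWith]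
    apply LipschitzOnWith.of_dist_le_mul
    intro x _ y _
    have : (dMap φ e c - ⇑((ContinuousLinearEquiv.refl ℝ PlaneV : PlaneV ≃L[ℝ] PlaneV) :
        PlaneV →L[ℝ] PlaneV)) = fun x => c • (φ x • e) := by
      funext z; simp [dMap]
    rw [this, dist_eq_norm, dist_eq_norm]
    have h2 : ‖c • φ x • e - c • φ y • e‖ = |c| * |φ x - φ y| := by
      rw [← smul_sub, ← sub_smul, norm_smul, norm_smul, he]; simp
    rw [h2]
    have h3 : |φ x - φ y| ≤ Λ * ‖x - y‖ := by
      have := hL.dist_le_mul x y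
      rwa [Real.dist_eq, dist_eq_norm] at this
    calc |c| * |φ x - φ y| ≤ |c| * (Λ * ‖x - y‖) := by gcongr
      _ = (|c| * Λ) * ‖x - y‖ := by ring
      _ ≤ (1/6) * ‖x - y‖ := by gcongr
      _ = _ := by simp
  have hN : ‖((ContinuousLinearEquiv.refl ℝ PlaneV).symm : PlaneV →L[ℝ] PlaneV)‖₊ = 1 := by
    ext
    have : ((ContinuousLinearEquiv.refl ℝ PlaneV).symm : PlaneV →L[ℝ] PlaneV)
      = ContinuousLinearMap.id ℝ PlaneV := rfl
    rw [this]
    simp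
  have hc' : Subsingleton PlaneV ∨ (1/6 : NNReal) <
      ‖((ContinuousLinearEquiv.refl ℝ PlaneV).symm : PlaneV →L[ℝ] PlaneV)‖₊⁻¹ := by
    right
    rw [hN, inv_one, ← NNReal.coe_lt_coe]
    norm_num
  refine ⟨?_, happ.surjective hc'⟩
  exact Set.injOn_univ.mp (happ.injOn hc')

lemma dMap_ball (hbij : Function.Bijective (dMap φ e c))
    (hsupp : ∀ x, x ∉ Metric.ball (0 : PlaneV) 1 → φ x = 0) :
    dMap φ e c '' Metric.ball 0 1 = Metric.ball 0 1 := by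
  have hfix : ∀ x, x ∉ Metric.ball (0 : PlaneV) 1 → dMap φ e c x = x := fun x hx => by
    simp [dMap, hsupp x hx]
  ext y
  constructor
  · rintro ⟨x, hx, rfl⟩
    by_contra h
    have := hbij.1 (hfix _ h)
    rw [this] at h
    exact h hx
  · intro hy
    obtain ⟨x, rfl⟩ := hbij.2 y
    refine ⟨x, ?_, rfl⟩
    by_contra h
    rw [hfix x h] at hy
    exact h hy

lemma dMap_outside (hbij : Function.Bijective (dMap φ e c))
    (hsupp : ∀ x, x ∉ Metric.ball (0 : PlaneV) 1 → φ x = 0) (E : Set PlaneV) :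
    (dMap φ e c '' E) \ Metric.ball 0 1 = E \ Metric.ball 0 1 := by
  have hfix : ∀ x, x ∉ Metric.ball (0 : PlaneV) 1 → dMap φ e c x = x := fun x hx => by
    simp [dMap, hsupp x hx]
  ext y
  constructor
  · rintro ⟨⟨x, hx, rfl⟩, h⟩
    have := hbij.1 (hfix _ h)
    rw [this] at h ⊢
    exact ⟨hx, h⟩
  · rintro ⟨h1, h2⟩
    exact ⟨⟨y, h1, hfix y h2⟩, h2⟩

lemma dMap_per (s : ℝ) (hbij : Function.Bijective (dMap φ e c))
    (hsupp : ∀ x, x ∉ Metric.ball (0 : PlaneV) 1 → φ x = 0) (E : Set PlaneV) :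
    fracPer 2 s (dMap φ e c '' E) (Metric.ball 0 1) =
      interL 2 s (dMap φ e c '' (E ∩ Metric.ball 0 1)) (dMap φ e c '' Eᶜ) +
      interL 2 s (dMap φ e c '' (E \ Metric.ball 0 1)) (dMap φ e c '' (Metric.ball 0 1 \ E)) := by
  unfold fracPer
  rw [Set.image_inter hbij.1, Set.image_compl_eq hbij, Set.image_sdiff hbij.1,
    Set.image_sdiff hbij.1, dMap_ball φ e c hbij hsupp]

lemma dMap_interL (s : ℝ) (hs : s ∈ Set.Ioo (0 : ℝ) 1) (Λ : NNReal) (hL : LipschitzWith Λ φ)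
    (hd : Differentiable ℝ φ) (he : ‖e‖ = 1) (hc0 : 0 ≤ c) (hc : c * Λ ≤ 1/6)
    (A B : Set PlaneV) (hA : MeasurableSet A) (hB : MeasurableSet B) :
    interL 2 s (dMap φ e c '' A) (dMap φ e c '' B) +
      interL 2 s (dMap φ e (-c) '' A) (dMap φ e (-c) '' B) ≤
      ENNReal.ofReal (2 + 400 * (c * Λ) ^ 2) * interL 2 s A B := by
  have b1 := dMap_bij φ e c Λ hL he (by rwa [abs_of_nonneg hc0])
  have b2 := dMap_bij φ e (-c) Λ hL he (by rwa [abs_neg, abs_of_nonneg hc0])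
  rw [interL_image s _ _ (dMap_fderiv φ e c hd) b1.1 A B hA hB,
    interL_image s _ _ (dMap_fderiv φ e (-c) hd) b2.1 A B hA hB]
  refine (le_lintegral_add _ _).trans ?_
  unfold interL
  rw [← lintegral_const_mul' _ _ ENNReal.ofReal_ne_top]
  refine lintegral_mono fun x => ?_
  refine (le_lintegral_add _ _).trans ?_
  beta_reduce
  rw [← lintegral_const_mul' _ _ ENNReal.ofReal_ne_top]
  refine lintegral_mono fun y => ?_
  have hder : ∀ z, |c * fderiv ℝ φ z e| ≤ c * Λ := fun z => by
    rw [abs_mul, abs_of_nonneg hc0]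
    gcongr
    have h1 := (fderiv ℝ φ z).le_opNorm e
    have h2 := norm_fderiv_le_of_lipschitz ℝ (x₀ := z) hL
    rw [he, mul_one] at h1
    exact h1.trans h2
  have hlt : c * Λ < 1 := by linarith
  have hx := abs_le.mp (hder x)
  have hy := abs_le.mp (hder y)
  have hv : ‖(c * (φ x - φ y)) • e‖ ≤ c * Λ * ‖x - y‖ := by
    rw [norm_smul, he, mul_one, Real.norm_eq_abs, abs_mul, abs_of_nonneg hc0, mul_assoc]
    gcongr
    have := hL.dist_le_mul x y
    rwa [Real.dist_eq, dist_eq_norm] at this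
  have key := aux_point s (c * Λ) hs (by positivity) hc (x - y) ((c * (φ x - φ y)) • e) hv
    (c * fderiv ℝ φ x e) (c * fderiv ℝ φ y e) (hder x) (hder y)
  have hcast : ((2 : ℕ) : ℝ) = 2 := by norm_num
  have p1 : (0 : ℝ) ≤ 1 + c * fderiv ℝ φ x e := by linarith
  have p2 : (0 : ℝ) ≤ 1 + c * fderiv ℝ φ y e := by linarith
  have p3 : (0 : ℝ) ≤ 1 - c * fderiv ℝ φ x e := by linarith
  have p4 : (0 : ℝ) ≤ 1 - c * fderiv ℝ φ y e := by linarith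
  beta_reduce
  rw [det_aux, det_aux, det_aux, det_aux, dMap_sub, dMap_sub, neg_mul, neg_mul, neg_mul, neg_smul,
    ← sub_eq_add_neg, ← sub_eq_add_neg, ← sub_eq_add_neg,
    abs_of_nonneg p1, abs_of_nonneg p2, abs_of_nonneg p3, abs_of_nonneg p4,
    ← ENNReal.ofReal_mul p2, ← ENNReal.ofReal_mul p1, ← ENNReal.ofReal_mul p4,
    ← ENNReal.ofReal_mul p3, ← ENNReal.ofReal_add (by positivity) (by positivity),
    ← ENNReal.ofReal_mul (by positivity), hcast]
  exact ENNReal.ofReal_le_ofReal key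

lemma dMap_est (s : ℝ) (hs : s ∈ Set.Ioo (0 : ℝ) 1) (Λ : NNReal) (hL : LipschitzWith Λ φ)
    (hd : Differentiable ℝ φ) (he : ‖e‖ = 1) (hc0 : 0 ≤ c) (hc : c * Λ ≤ 1/6)
    (hsupp : ∀ x, x ∉ Metric.ball (0 : PlaneV) 1 → φ x = 0)
    (E : Set PlaneV) (hE : MeasurableSet E) (hmin : SMinimalIn 2 s E (Metric.ball 0 1)) :
    interL 2 s ((dMap φ e c '' E) \ E) (E \ (dMap φ e c '' E)) ≤
      ENNReal.ofReal (400 * (c * Λ) ^ 2) * fracPer 2 s E (Metric.ball 0 1) := by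
  have b1 := dMap_bij φ e c Λ hL he (by rwa [abs_of_nonneg hc0])
  have b2 := dMap_bij φ e (-c) Λ hL he (by rwa [abs_neg, abs_of_nonneg hc0])
  have mball : MeasurableSet (Metric.ball (0 : PlaneV) 1) := measurableSet_ball
  have mim : ∀ c', Function.Bijective (dMap φ e c') → MeasurableSet (dMap φ e c' '' E) := by
    intro c' hb
    exact measurable_image_of_fderivWithin hE
      (fun x _ => (dMap_fderiv φ e c' hd x).hasFDerivWithinAt) hb.1.injOn
  set P := fracPer 2 s E (Metric.ball 0 1) with hP
  have hPtop : P ≠ ⊤ := hmin.1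
  have hsum : fracPer 2 s (dMap φ e c '' E) (Metric.ball 0 1) +
      fracPer 2 s (dMap φ e (-c) '' E) (Metric.ball 0 1) ≤
      ENNReal.ofReal (2 + 400 * (c * Λ) ^ 2) * P := by
    rw [dMap_per φ e c s b1 hsupp, dMap_per φ e (-c) s b2 hsupp, add_add_add_comm, hP]
    unfold fracPer
    rw [mul_add]
    exact add_le_add
      (dMap_interL φ e c s hs Λ hL hd he hc0 hc _ _ (hE.inter mball) hE.compl)
      (dMap_interL φ e c s hs Λ hL hd he hc0 hc _ _ (hE.diff mball) (mball.diff hE))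
  have o1 := dMap_outside φ e c b1 hsupp E
  have m2 := hmin.2 _ (mim _ b2) (dMap_outside φ e (-c) b2 hsupp E)
  have mU := hmin.2 (dMap φ e c '' E ∪ E) ((mim _ b1).union hE) (by
    rw [Set.union_sdiff_distrib, o1, Set.union_self])
  have mI := hmin.2 (dMap φ e c '' E ∩ E) ((mim _ b1).inter hE) (by
    ext x
    have := Set.ext_iff.mp o1 x
    simp only [Set.mem_sdiff, Set.mem_inter_iff] at this ⊢
    tauto)
  have hsub := fracPer_submod s (dMap φ e c '' E) E (Metric.ball 0 1) (mim _ b1) hE o1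
  set X := interL 2 s ((dMap φ e c '' E) \ E) (E \ (dMap φ e c '' E))
  set P1 := fracPer 2 s (dMap φ e c '' E) (Metric.ball 0 1)
  have hfin : (P + P + P) + X ≤ (P + P + P) + ENNReal.ofReal (400 * (c * Λ) ^ 2) * P := by
    calc (P + P + P) + X = (P + P + X) + P := by ring
      _ ≤ (P1 + P) + fracPer 2 s (dMap φ e (-c) '' E) (Metric.ball 0 1) := by
        refine add_le_add (le_trans ?_ hsub) m2
        gcongr
      _ = (P1 + fracPer 2 s (dMap φ e (-c) '' E) (Metric.ball 0 1)) + P := by ring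
      _ ≤ ENNReal.ofReal (2 + 400 * (c * Λ) ^ 2) * P + P := by gcongr
      _ = _ := by
        rw [ENNReal.ofReal_add (by norm_num) (by positivity)]
        norm_num
        ring
  exact (ENNReal.add_le_add_iff_left (by simp [hPtop])).mp hfin

end deform

/-- translate estimate -/
lemma trans_est (s : ℝ) (hs : s ∈ Set.Ioo (0 : ℝ) 1)
    (E : Set PlaneV) (hE : MeasurableSet E) (hmin : SMinimalIn 2 s E (Metric.ball 0 1))
    (e : PlaneV) (he : ‖e‖ = 1) : ∃ C : ℝ, 0 ≤ C ∧ ∃ c₀ : ℝ, 0 < c₀ ∧ ∀ c, 0 < c → c ≤ c₀ →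
      interL 2 s (({x | x - c • e ∈ E} \ E) ∩ Metric.ball 0 (1/4))
        ((E \ {x | x - c • e ∈ E}) ∩ Metric.ball 0 (1/4)) ≤
        ENNReal.ofReal (C * c ^ 2) := by
  let φ : ContDiffBump (0 : PlaneV) := ⟨1/2, 1, by norm_num, by norm_num⟩
  obtain ⟨Λ, hL⟩ := ContDiff.lipschitzWith_of_hasCompactSupport φ.hasCompactSupport
    (φ.contDiff (n := 1)) (by simp)
  have hd : Differentiable ℝ φ := (φ.contDiff (n := 1)).differentiable (by simp)
  have hsupp : ∀ x, x ∉ Metric.ball (0 : PlaneV) 1 → φ x = 0 := fun x hx => by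
    have := φ.support_eq
    rw [← Function.notMem_support, this]
    exact hx
  refine ⟨400 * Λ ^ 2 * (fracPer 2 s E (Metric.ball 0 1)).toReal, by positivity,
    min (1/4) (1 / (6 * (Λ + 1))), by positivity, ?_⟩
  intro c hc hcle
  have hc1 : c ≤ 1/4 := hcle.trans (min_le_left _ _)
  have hc2 : c ≤ 1 / (6 * (Λ + 1)) := hcle.trans (min_le_right _ _)
  have hcΛ : c * Λ ≤ 1/6 := by
    rw [le_div_iff₀ (by positivity)] at hc2
    nlinarith
  have hloc : ∀ y ∈ Metric.ball (0 : PlaneV) (1/4), (y ∈ dMap φ e c '' E ↔ y - c • e ∈ E) := by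
    intro y hy
    have hbij := dMap_bij φ e c Λ hL he (by rwa [abs_of_pos hc])
    have h1 : dMap φ e c (y - c • e) = y := by
      have : φ (y - c • e) = 1 := by
        apply φ.one_of_mem_closedBall
        rw [mem_closedBall_zero_iff]
        rw [mem_ball_zero_iff] at hy
        have := norm_sub_le y (c • e)
        rw [norm_smul, he, Real.norm_of_nonneg hc.le] at this
        change _ ≤ (1/2 : ℝ)
        linarith
      simp [dMap, this]
    nth_rewrite 1 [← h1]
    exact hbij.1.mem_set_image
  have hest := dMap_est φ e c s hs Λ hL hd he hc.le hcΛ hsupp E hE hmin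
  refine le_trans (interL_mono s ?_ ?_) (hest.trans ?_)
  · rintro y ⟨⟨h1, h2⟩, h3⟩
    exact ⟨(hloc y h3).mpr h1, h2⟩
  · rintro y ⟨⟨h1, h2⟩, h3⟩
    exact ⟨h1, fun h => h2 ((hloc y h3).mp h)⟩
  · rw [← ENNReal.ofReal_toReal hmin.1, ← ENNReal.ofReal_mul (by positivity),
      ENNReal.toReal_ofReal (by positivity)]
    apply ENNReal.ofReal_le_ofReal
    apply le_of_eq
    ring
/-! ### The dichotomy -/

lemma interL_eq_zero (s : ℝ) (hs : s ∈ Set.Ioo (0 : ℝ) 1) (A B : Set PlaneV)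
    (h : interL 2 s A B = 0) : volume A = 0 ∨ volume B = 0 := by
  by_contra! hcon
  obtain ⟨hA, hB⟩ := hcon
  unfold interL at h
  rw [lintegral_eq_zero_iff (kernel_meas s).lintegral_prod_right'] at h
  have hne : (ae (volume.restrict A)).NeBot := by
    rw [ae_neBot]
    intro h0
    exact hA (Measure.restrict_eq_zero.mp h0)
  obtain ⟨x, hx⟩ := h.exists
  have hx' : ∫⁻ y in B, ENNReal.ofReal (1 / ‖x - y‖ ^ (((2 : ℕ) : ℝ) + s)) = 0 := hx
  rw [lintegral_eq_zero_iff (by fun_prop)] at hx'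
  have h2 : ∀ᵐ y ∂(volume.restrict B), y = x := by
    filter_upwards [hx'] with y hy
    by_contra hyx
    have hpos : 0 < ‖x - y‖ := norm_pos_iff.mpr (sub_ne_zero.mpr (Ne.symm hyx))
    have : 0 < 1 / ‖x - y‖ ^ (((2 : ℕ) : ℝ) + s) := by positivity
    exact (ENNReal.ofReal_pos.mpr this).ne' hy
  have h3 : ∀ᵐ y ∂(volume.restrict B), y ≠ x := by
    apply ae_restrict_of_ae
    exact Measure.ae_ne volume x
  have hne : (ae (volume.restrict B)).NeBot := by
    rw [ae_neBot]
    intro h0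
    exact hB (Measure.restrict_eq_zero.mp h0)
  obtain ⟨y, hy1, hy2⟩ := (h2.and h3).exists
  exact hy2 hy1

lemma exists_ball_ne (A : Set PlaneV) (hA : volume A ≠ 0) :
    ∃ n : ℕ, volume (A ∩ Metric.ball 0 n) ≠ 0 := by
  by_contra! h
  apply hA
  have : A = ⋃ n : ℕ, A ∩ Metric.ball 0 n := by
    rw [← Set.inter_iUnion, Metric.iUnion_ball_nat, Set.inter_univ]
  rw [this]
  exact measure_iUnion_null h

lemma dichotomy_unit (s : ℝ) (hs : s ∈ Set.Ioo (0 : ℝ) 1)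
    (E : Set PlaneV) (hE : MeasurableSet E) (hmin : SMinimalIn 2 s E (Metric.ball 0 1))
    (hcone : ∀ t : ℝ, 0 < t → ∀ x, t • x ∈ E ↔ x ∈ E)
    (e : PlaneV) (he : ‖e‖ = 1) :
    volume ({x | x - e ∈ E} \ E) = 0 ∨ volume (E \ {x | x - e ∈ E}) = 0 := by
  by_contra! hcon
  obtain ⟨h1, h2⟩ := hcon
  obtain ⟨n1, hn1⟩ := exists_ball_ne _ h1
  obtain ⟨n2, hn2⟩ := exists_ball_ne _ h2
  set R : ℝ := max (n1 : ℝ) n2 + 1 with hR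
  have hRpos : 0 < R := by positivity
  have hT : MeasurableSet {x | x - e ∈ E} := (measurable_id.sub_const e) hE
  set A := ({x | x - e ∈ E} \ E) ∩ Metric.ball 0 R with hA
  set B := (E \ {x | x - e ∈ E}) ∩ Metric.ball 0 R with hB
  have mA : MeasurableSet A := (hT.diff hE).inter measurableSet_ball
  have mB : MeasurableSet B := (hE.diff hT).inter measurableSet_ball
  have hA0 : volume A ≠ 0 := fun h => hn1 (measure_mono_null
    (Set.inter_subset_inter_right _ (Metric.ball_subset_ball (by
      rw [hR]; linarith [le_max_left (n1 : ℝ) n2]))) h)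
  have hB0 : volume B ≠ 0 := fun h => hn2 (measure_mono_null
    (Set.inter_subset_inter_right _ (Metric.ball_subset_ball (by
      rw [hR]; linarith [le_max_right (n1 : ℝ) n2]))) h)
  obtain ⟨C, hC, c₀, hc₀, hest⟩ := trans_est s hs E hE hmin e he
  have hbound : ∀ c, 0 < c → c ≤ c₀ → c * R ≤ 1/4 →
      interL 2 s A B ≤ ENNReal.ofReal (C * c ^ s) := by
    intro c hc hcle hcR
    have hmem : ∀ x, x ∈ Metric.ball (0 : PlaneV) R → c • x ∈ Metric.ball (0 : PlaneV) (1/4) := by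
      intro x hx
      rw [mem_ball_zero_iff] at hx ⊢
      rw [norm_smul, Real.norm_of_nonneg hc.le]
      exact lt_of_lt_of_le (by gcongr) hcR
    have hsc := interL_scale s c hc A B mA mB
    have hle : interL 2 s ((fun x => c • x) '' A) ((fun x => c • x) '' B) ≤
        ENNReal.ofReal (C * c ^ 2) := by
      refine le_trans (interL_mono s ?_ ?_) (hest c hc hcle)
      · rintro _ ⟨x, ⟨⟨hx1, hx2⟩, hx3⟩, rfl⟩
        refine ⟨⟨?_, ?_⟩, hmem x hx3⟩
        · change c • x - c • e ∈ E
          rw [← smul_sub, hcone c hc]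
          exact hx1
        · exact fun h => hx2 ((hcone c hc x).mp h)
      · rintro _ ⟨x, ⟨⟨hx1, hx2⟩, hx3⟩, rfl⟩
        refine ⟨⟨(hcone c hc x).mpr hx1, ?_⟩, hmem x hx3⟩
        change ¬ (c • x - c • e ∈ E)
        rw [← smul_sub, hcone c hc]
        exact hx2
    rw [hsc] at hle
    have hcp : 0 < c ^ (2 - s) := Real.rpow_pos_of_pos hc _
    have heq : ENNReal.ofReal (C * c ^ 2) =
        ENNReal.ofReal (c ^ (2 - s)) * ENNReal.ofReal (C * c ^ s) := by
      rw [← ENNReal.ofReal_mul hcp.le]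
      congr 1
      have : c ^ 2 = c ^ (2 - s) * c ^ s := by
        rw [← Real.rpow_add hc, ← Real.rpow_natCast]; congr 1; push_cast; ring
      rw [this]; ring
    rw [heq] at hle
    exact (ENNReal.mul_le_mul_iff_right (ENNReal.ofReal_pos.mpr hcp).ne' ENNReal.ofReal_ne_top).mp hle
  have hlim : Filter.Tendsto (fun c : ℝ => ENNReal.ofReal (C * c ^ s))
      (nhdsWithin 0 (Set.Ioi 0)) (nhds 0) := by
    have h0 : Filter.Tendsto (fun c : ℝ => C * c ^ s) (nhds 0) (nhds 0) := by
      have : ContinuousAt (fun c : ℝ => C * c ^ s) 0 :=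
        continuousAt_const.mul (Real.continuousAt_rpow_const _ _ (Or.inr hs.1.le))
      have h := this.tendsto
      simpa [Real.zero_rpow hs.1.ne'] using h
    have := ENNReal.tendsto_ofReal (h0.mono_left (nhdsWithin_le_nhds (s := Set.Ioi (0:ℝ))))
    simpa using this
  have hzero : interL 2 s A B = 0 := by
    apply le_antisymm _ zero_le
    apply ge_of_tendsto hlim
    have hpos : 0 < min c₀ (1 / (4 * R)) := by positivity
    filter_upwards [Ioc_mem_nhdsGT hpos] with c hc
    apply hbound c hc.1 (hc.2.trans (min_le_left _ _))
    have := hc.2.trans (min_le_right _ _)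
    rw [le_div_iff₀ (by positivity)] at this
    linarith
  rcases interL_eq_zero s hs A B hzero with h | h
  · exact hA0 h
  · exact hB0 h

/-! ### Cones with density -/

lemma ae_translate (p : PlaneV → Prop) (e : PlaneV) (h : ∀ᵐ x, p x) : ∀ᵐ x, p (x + e) :=
  (measurePreserving_add_right volume e).quasiMeasurePreserving.ae h

lemma ae_scale (p : PlaneV → Prop) (t : ℝ) (ht : 0 < t) (h : ∀ᵐ x, p x) :
    ∀ᵐ x, p (t • x) := by
  rw [ae_iff] at h ⊢
  have : {x : PlaneV | ¬ p (t • x)} = (fun x => t • x) ⁻¹' {x | ¬ p x} := rfl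
  rw [this, Measure.addHaar_preimage_smul volume ht.ne', h, mul_zero]

lemma density_cone (G : Set PlaneV) (hG : MeasurableSet G)
    (hcone : ∀ t : ℝ, 0 < t → ∀ x, t • x ∈ G ↔ x ∈ G) (x : PlaneV)
    (hx : Filter.Tendsto (fun r => volume (G ∩ Metric.closedBall x r) /
      volume (Metric.closedBall x r)) (nhdsWithin 0 (Set.Ioi 0)) (nhds 1))
    (hsub : ∀ᵐ y, y ∈ G → y - x ∈ G) : volume Gᶜ = 0 := by
  have hscale : ∀ r : ℝ, 0 < r → ∀ H : Set PlaneV, (∀ t : ℝ, 0 < t → ∀ x, t • x ∈ H ↔ x ∈ H) →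
      volume (H ∩ Metric.closedBall 0 r) =
      ENNReal.ofReal (r ^ 2) * volume (H ∩ Metric.closedBall 0 1) := by
    intro r hr H hH
    have : H ∩ Metric.closedBall 0 r =
        (fun y => r⁻¹ • y) ⁻¹' (H ∩ Metric.closedBall (0 : PlaneV) 1) := by
      ext y
      simp only [Set.mem_inter_iff, Set.mem_preimage, hH r⁻¹ (inv_pos.mpr hr),
        mem_closedBall_zero_iff, norm_smul, norm_inv, Real.norm_of_nonneg hr.le]
      rw [inv_mul_le_iff₀ hr, mul_one]
    rw [this, Measure.addHaar_preimage_smul volume (inv_pos.mpr hr).ne']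
    congr 2
    simp
  have hball : ∀ r : ℝ, 0 < r → volume (Metric.closedBall (0 : PlaneV) r) =
      ENNReal.ofReal (r ^ 2) * volume (Metric.closedBall (0 : PlaneV) 1) := by
    intro r hr
    have := hscale r hr Set.univ (by simp)
    simpa only [Set.univ_inter] using this
  have hb0 : volume (Metric.closedBall (0 : PlaneV) 1) ≠ 0 :=
    (Metric.measure_closedBall_pos volume _ one_pos).ne'
  have hbt : volume (Metric.closedBall (0 : PlaneV) 1) ≠ ⊤ := measure_closedBall_lt_top.ne
  have hle : ∀ r : ℝ, 0 < r → volume (G ∩ Metric.closedBall x r) / volume (Metric.closedBall x r)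
      ≤ volume (G ∩ Metric.closedBall 0 1) / volume (Metric.closedBall (0 : PlaneV) 1) := by
    intro r hr
    have e1 : volume (Metric.closedBall x r) = volume (Metric.closedBall (0 : PlaneV) r) :=
      Measure.addHaar_closedBall_center volume x r
    have e2 : volume (G ∩ Metric.closedBall x r) ≤ volume (G ∩ Metric.closedBall 0 r) := by
      have : volume ((fun y => y + -x) ⁻¹' (G ∩ Metric.closedBall 0 r)) =
          volume (G ∩ Metric.closedBall 0 r) := measure_preimage_add_right _ _ _
      rw [← this]
      apply measure_mono_ae
      filter_upwards [hsub] with y hy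
      rintro ⟨h1, h2⟩
      refine ⟨by simpa [sub_eq_add_neg] using hy h1, ?_⟩
      rw [mem_closedBall_zero_iff]
      beta_reduce
      rw [← sub_eq_add_neg, ← dist_eq_norm]
      exact h2
    have hr2 : ENNReal.ofReal (r ^ 2) ≠ 0 := (ENNReal.ofReal_pos.mpr (by positivity)).ne'
    calc _ ≤ volume (G ∩ Metric.closedBall 0 r) / volume (Metric.closedBall (0 : PlaneV) r) := by
          rw [e1]; gcongr
      _ = _ := by
          rw [hscale r hr G hcone, hball r hr]
          exact ENNReal.mul_div_mul_left _ _ hr2 ENNReal.ofReal_ne_top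
  have h1 : 1 ≤ volume (G ∩ Metric.closedBall 0 1) / volume (Metric.closedBall (0 : PlaneV) 1) := by
    apply le_of_tendsto hx
    filter_upwards [self_mem_nhdsWithin] with r hr
    exact hle r hr
  rw [ENNReal.le_div_iff_mul_le (Or.inl hb0) (Or.inl hbt), one_mul] at h1
  have hdiff : volume (Gᶜ ∩ Metric.closedBall 0 1) = 0 := by
    have hadd := measure_inter_add_sdiff (μ := volume) (Metric.closedBall (0 : PlaneV) 1) hG
    rw [Set.inter_comm] at hadd
    have : Gᶜ ∩ Metric.closedBall 0 1 = Metric.closedBall 0 1 \ G := by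
      ext y; simp [and_comm]
    rw [this]
    have hft : volume (G ∩ Metric.closedBall 0 1) ≠ ⊤ :=
      ne_top_of_le_ne_top hbt (measure_mono Set.inter_subset_right)
    have : volume (G ∩ Metric.closedBall 0 1) + volume (Metric.closedBall 0 1 \ G) ≤
        volume (G ∩ Metric.closedBall 0 1) + 0 := by rw [hadd, add_zero]; exact h1
    exact le_antisymm ((ENNReal.add_le_add_iff_left hft).mp this) zero_le
  by_contra hne
  obtain ⟨n, hn⟩ := exists_ball_ne _ hne
  apply hn
  refine measure_mono_null (Set.inter_subset_inter_right _ (Metric.ball_subset_closedBall.trans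
    (Metric.closedBall_subset_closedBall (by linarith : (n : ℝ) ≤ n + 1)))) ?_
  rw [hscale (n + 1) (by positivity) Gᶜ (fun t ht x => not_congr (hcone t ht x)), hdiff, mul_zero]

/-- Theorem 1.1: a nontrivial `s`-minimal cone in `ℝ²` is a half-plane
`{x : ⟪x, ν⟫ > 0}` (up to a set of measure zero). -/
theorem stmt_19 (s : ℝ) (hs : s ∈ Set.Ioo (0 : ℝ) 1)
    (E : Set (EuclideanSpace ℝ (Fin 2))) (hE : MeasurableSet E)
    (hcone : ∀ t : ℝ, 0 < t → (fun x => t • x) '' E = E)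
    (hmin : ∀ R : ℝ, 0 < R → SMinimalIn 2 s E (Metric.ball 0 R))
    (hne : volume E ≠ 0) (hne' : volume Eᶜ ≠ 0) :
    ∃ ν : EuclideanSpace ℝ (Fin 2), ‖ν‖ = 1 ∧
      E =ᵐ[volume] {x : EuclideanSpace ℝ (Fin 2) | 0 < ⟪x, ν⟫} := by
  have hc : ∀ t : ℝ, 0 < t → ∀ x, t • x ∈ E ↔ x ∈ E := by
    intro t ht x
    nth_rewrite 1 [← hcone t ht]
    exact (smul_right_injective _ ht.ne').mem_set_image
  set S : Set PlaneV := {e | ∀ᵐ x, x ∈ E → x + e ∈ E} with hS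
  have S0 : (0 : PlaneV) ∈ S := by simp [hS]
  have Sadd : ∀ a ∈ S, ∀ b ∈ S, a + b ∈ S := by
    intro a ha b hb
    have hb' := ae_translate _ a hb
    change ∀ᵐ x, x ∈ E → x + (a + b) ∈ E
    filter_upwards [ha, hb'] with x h1 h2 h3
    rw [← add_assoc]
    exact h2 (h1 h3)
  have Ssmul : ∀ t : ℝ, 0 ≤ t → ∀ a ∈ S, t • a ∈ S := by
    intro t ht a ha
    rcases ht.eq_or_lt with rfl | ht
    · rw [zero_smul]; exact S0
    have := ae_scale _ t⁻¹ (inv_pos.mpr ht) ha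
    change ∀ᵐ x, x ∈ E → x + t • a ∈ E
    filter_upwards [this] with x h1 h2
    have h3 := h1 ((hc _ (inv_pos.mpr ht) x).mpr h2)
    rw [← hc t ht, smul_add, smul_inv_smul₀ ht.ne'] at h3
    exact h3
  have Sdich1 : ∀ e : PlaneV, ‖e‖ = 1 → e ∈ S ∨ -e ∈ S := by
    intro e he
    rcases dichotomy_unit s hs E hE (hmin 1 one_pos) hc e he with h | h
    · left
      have h' : ∀ᵐ y : PlaneV, y - e ∈ E → y ∈ E := by
        rw [ae_iff]
        convert h using 2
        ext y; simp
      have := ae_translate _ e h'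
      simpa [hS] using this
    · right
      change ∀ᵐ y : PlaneV, y ∈ E → y + -e ∈ E
      rw [ae_iff]
      convert h using 2
      ext y; simp [sub_eq_add_neg]
  have Sdich : ∀ e : PlaneV, e ∈ S ∨ -e ∈ S := by
    intro e
    by_cases he : e = 0
    · left; rw [he]; exact S0
    have hn : 0 < ‖e‖ := norm_pos_iff.mpr he
    have h1 : ‖(‖e‖⁻¹ • e)‖ = 1 := norm_smul_inv_norm' (𝕜 := ℝ) (r := 1) zero_le_one he |> fun h => by
      simpa using h
    rcases Sdich1 _ h1 with h | h
    · left
      have := Ssmul ‖e‖ hn.le _ h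
      rwa [smul_inv_smul₀ hn.ne'] at this
    · right
      have := Ssmul ‖e‖ hn.le _ h
      rwa [smul_neg, smul_inv_smul₀ hn.ne'] at this
  have hES : ∀ᵐ x, x ∈ E ↔ x ∈ S := by
    have d1 := Besicovitch.ae_tendsto_measure_inter_div_of_measurableSet
      (volume : Measure PlaneV) hE
    have d2 := Besicovitch.ae_tendsto_measure_inter_div_of_measurableSet
      (volume : Measure PlaneV) hE.compl
    filter_upwards [d1, d2] with x h1 h2
    constructor
    · intro hx
      rcases Sdich x with h | h
      · exact h
      exfalso
      apply hne'
      refine density_cone E hE hc x ?_ ?_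
      · simpa [hx] using h1
      · have h' : ∀ᵐ y, y ∈ E → y + -x ∈ E := h
        simpa [sub_eq_add_neg] using h'
    · intro hx
      by_contra hxE
      apply hne
      rw [← compl_compl E]
      refine density_cone Eᶜ hE.compl (fun t ht y => not_congr (hc t ht y)) x ?_ ?_
      · simpa [hxE] using h2
      · have h' : ∀ᵐ y, y ∈ E → y + x ∈ E := hx
        filter_upwards [ae_translate _ (-x) h'] with y hy h3 h4
        apply h3
        have := hy (by simpa [sub_eq_add_neg] using h4)
        simpa using this
  have hESset : E =ᵐ[volume] S := by
    filter_upwards [hES] with x hx using propext hx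
  have Sconv : Convex ℝ S := by
    intro x hx y hy a b ha hb _
    exact Sadd _ (Ssmul a ha x hx) _ (Ssmul b hb y hy)
  have Scpos : ∀ t : ℝ, 0 < t → ∀ x ∉ S, t • x ∉ S := by
    intro t ht x hx h
    apply hx
    have := Ssmul t⁻¹ (inv_pos.mpr ht).le _ h
    rwa [inv_smul_smul₀ ht.ne'] at this
  have Scconv : Convex ℝ Sᶜ := by
    intro x hx y hy a b ha hb hab
    rcases ha.eq_or_lt with rfl | ha'
    · have : b = 1 := by linarith
      simpa [this] using hy
    intro h
    have h1 : -y ∈ S := (Sdich y).resolve_left hy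
    have h2 := Sadd _ h _ (Ssmul b hb _ h1)
    rw [smul_neg, add_neg_cancel_right] at h2
    exact Scpos a ha' x hx h2
  have hfront : volume (frontier S) = 0 := Sconv.addHaar_frontier volume
  have hSint : S =ᵐ[volume] interior S := (interior_ae_eq_of_null_frontier hfront).symm
  have hintne : (interior S).Nonempty := by
    by_contra h
    rw [Set.not_nonempty_iff_eq_empty] at h
    apply hne
    rw [measure_congr (hESset.trans hSint), h, measure_empty]
  have hcne : (Sᶜ).Nonempty := by
    by_contra h
    rw [Set.not_nonempty_iff_eq_empty] at h
    apply hne'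
    rw [measure_congr hESset.compl, h, measure_empty]
  obtain ⟨f, u, hf1, hf2⟩ := geometric_hahn_banach_open Sconv.interior isOpen_interior Scconv
    (Set.disjoint_compl_right_iff_subset.mpr interior_subset)
  have lim0 : ∀ z : PlaneV, Filter.Tendsto (fun t : ℝ => f (t • z)) (nhdsWithin 0 (Set.Ioi 0))
      (nhds 0) := by
    intro z
    have hcont : Continuous (fun t : ℝ => f (t • z)) := by fun_prop
    have := (hcont.tendsto 0).mono_left (nhdsWithin_le_nhds (s := Set.Ioi (0:ℝ)))
    simpa using this
  have hu1 : u ≤ 0 := by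
    obtain ⟨z, hz⟩ := hcne
    apply ge_of_tendsto (lim0 z)
    filter_upwards [self_mem_nhdsWithin] with t ht
    exact hf2 _ (Scpos t ht z hz)
  have hlt : ∀ z ∈ interior S, f z < 0 := fun z hz => (hf1 z hz).trans_le hu1
  have hu2 : 0 ≤ u := by
    by_contra! hneg
    obtain ⟨z, hz⟩ := hintne
    have h0 : (0 : PlaneV) ∈ closure (interior S) := by
      rw [Sconv.closure_interior_eq_closure_of_nonempty_interior ⟨z, hz⟩]
      exact subset_closure S0
    have hcl : closure (interior S) ⊆ {w | f w ≤ u} :=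
      closure_minimal (fun w hw => (hf1 w hw).le) (isClosed_le f.continuous continuous_const)
    have := hcl h0
    simp at this
    linarith
  have hsub2 : {z | f z < 0} ⊆ S := by
    intro z hz
    by_contra h
    have := hf2 z h
    have hz' : f z < 0 := hz
    linarith
  have hEf : E =ᵐ[volume] {z | f z < 0} := by
    filter_upwards [hESset.trans hSint, hESset] with x h1 h2
    have h1' : x ∈ E ↔ x ∈ interior S := iff_of_eq h1
    have h2' : x ∈ E ↔ x ∈ S := iff_of_eq h2
    apply propext
    change x ∈ E ↔ f x < 0
    exact ⟨fun h => hlt x (h1'.mp h), fun h => h2'.mpr (hsub2 h)⟩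
  set w := (InnerProductSpace.toDual ℝ PlaneV).symm f with hw
  have hfw : ∀ x, f x = ⟪w, x⟫ := fun x => by
    rw [hw, InnerProductSpace.toDual_symm_apply]
  have hwne : w ≠ 0 := by
    intro h0
    obtain ⟨z, hz⟩ := hintne
    have := hlt z hz
    rw [hfw, h0, inner_zero_left] at this
    exact lt_irrefl _ this
  have hwn : 0 < ‖w‖ := norm_pos_iff.mpr hwne
  refine ⟨-(‖w‖⁻¹ • w), ?_, ?_⟩
  · rw [norm_neg, norm_smul, norm_inv, norm_norm, inv_mul_cancel₀ hwn.ne']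
  · have hset : {x : PlaneV | 0 < ⟪x, -(‖w‖⁻¹ • w)⟫} = {z | f z < 0} := ?_
    · rw [hset]; exact hEf
    ext x
    simp only [Set.mem_setOf_eq]
    rw [inner_neg_right, real_inner_smul_right, real_inner_comm, ← hfw, ← mul_neg,
      mul_pos_iff_of_pos_left (inv_pos.mpr hwn), neg_pos]
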